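/- Define the zeta-modified operators L̄⁽ʳ⁾(n) = L⁽ʳ⁾(n) for n ≠ 0 and L̄⁽ʳ⁾(0) = L⁽ʳ⁾(0) + (−1)ʳ·(1/2)·ζ(−2r−1)·id_S. Then for all r, s ∈ ℕ there exists a constant c_{r,s} ∈ ℂ such that for every m ∈ ℤ the commutator [L̄⁽ʳ⁾(m), L̄⁽ˢ⁾(−m)] − c_{r,s}·m^{2r+2s+3}·id_S lies in the ℂ-linear span of {L̄⁽ᵖ⁾(0) : p ∈ ℕ}; that is, after the zeta-function modification the central term of the bracket is a pure monomial in m of degree 2r+2s+3. -/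

import Mathlib

/-!
The idea is to let everything act on the `h(k)` by commutators. An operator on a Fock module is
determined by its commutators with the `h(k)` and its value on the vacuum, and
`[L⁽ʳ⁾(n), h(k)] = (-k)ʳ⁺¹ (n + k)ʳ h(n + k)`. Comparing both sides in this way, for
`m ≥ 0` and `N = r + s + 1`,

`[L⁽ʳ⁾(m), L⁽ˢ⁾(-m)] = ∑ⱼ g(j) :h(j)h(-j): + ½ ∑_{0 < i ≤ m} f(i)`,

where `f = X g = Xᴺ (m - X)ᴺ`. Only the even monomials of `g` contribute to the normally ordered
sum, and adding the zeta regularisation `ζ(f)` of `∑_{i > 0} f(i)` turns it into a combination of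
the `L̄⁽ᵖ⁾(0)`. The remaining constant is `½ ∑_{0 < i ≤ m} f(i) - ζ(f)`. Now
`ζ(f) + ζ(f(-X)) = -f(0)` because `ζ` vanishes at the negative even integers, while the Bernoulli
recursion gives
`ζ(f) - ζ(f(X + m)) = ∑_{0 < i ≤ m} f(i) - ∫₀ᵐ f`. Since `f(X + m) = f(-X)`, the constant is
`½ ∫₀ᵐ xᴺ (m - x)ᴺ dx`, a Beta integral, hence a pure monomial in `m` of degree `2N + 1`.
-/

noncomputable section

/-- The polynomial algebra `S = ℂ[a₁,a₂,a₃,…]`, with variables indexed by `ℕ+`. -/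
abbrev SS : Type := MvPolynomial ℕ+ ℂ

/-- The Heisenberg operators `h(n)` on `S`: for `n < 0`, multiplication by `a₋ₙ`;
for `n > 0`, `n·∂/∂aₙ`; and `h(0) = 0`. -/
noncomputable def hOp (n : ℤ) : Module.End ℂ SS :=
  if _h1 : 0 < n then
    (n : ℂ) • (MvPolynomial.pderiv (R := ℂ) (⟨n.toNat, by omega⟩ : ℕ+)).toLinearMap
  else if _h2 : n < 0 then
    LinearMap.mulLeft ℂ (MvPolynomial.X (⟨(-n).toNat, by omega⟩ : ℕ+))
  else 0

/-- The normally ordered product `:h(i)h(j):`  (equal to `h(i)∘h(j)` if `i ≤ j`,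
and to `h(j)∘h(i)` if `i > j`; note `f * g` is composition in `Module.End`). -/
noncomputable def nord (i j : ℤ) : Module.End ℂ SS :=
  if i ≤ j then hOp i * hOp j else hOp j * hOp i

section LinearAlgebra

attribute [local instance] LieRing.ofAssociativeRing

variable {R M : Type*} [CommRing R] [AddCommGroup M] [Module R M]

theorem lie_mul_left {A : Type*} [Ring A] (a b c : A) : ⁅a * b, c⁆ = a * ⁅b, c⁆ + ⁅a, c⁆ * b := by
  simp only [Ring.lie_def]
  noncomm_ring

theorem end_apply_apply_eq_lie_apply_add (S T : Module.End R M) (x : M) :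
    S (T x) = ⁅S, T⁆ x + T (S x) := by
  simp [Ring.lie_def]

theorem lie_lie_of_lie_eq_smul {L : Type*} [LieRing L] [LieRingModule L M] [LieAlgebra R L]
    [LieModule R L M] {x y : L} {v : ℤ → M} {a b : ℤ → R} {m n : ℤ}
    (hx : ∀ k, ⁅x, v k⁆ = a k • v (m + k)) (hy : ∀ k, ⁅y, v k⁆ = b k • v (n + k)) (k : ℤ) :
    ⁅⁅x, y⁆, v k⁆ = (b k * a (n + k) - a k * b (m + k)) • v (m + n + k) := by
  rw [lie_lie, hx, hy, lie_smul, lie_smul, hx, hy, smul_smul, smul_smul, sub_smul, ← add_assoc,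
    ← add_assoc, add_comm n m]

theorem smul_one_lie {A : Type*} [Ring A] [Algebra R A] (a : R) (x : A) :
    ⁅a • (1 : A), x⁆ = 0 := by
  rw [Ring.lie_def, smul_one_mul, mul_smul_one, sub_self]

theorem lie_add_smul_one {A : Type*} [Ring A] [Algebra R A] (x y : A) (a b : R) :
    ⁅x + a • 1, y + b • 1⁆ = ⁅x, y⁆ := by
  rw [add_lie, smul_one_lie, add_zero, lie_add, ← lie_skew x (b • 1), smul_one_lie, neg_zero,
    add_zero]

end LinearAlgebra

section FockModule

attribute [local instance] LieRing.ofAssociativeRing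

variable {R V : Type*} [CommRing R] [AddCommGroup V] [Module R V]

/-- A Fock module of the Heisenberg algebra: operators `h n` satisfying the canonical commutation
relations, together with a cyclic vacuum vector `v` killed by the `h n` with `n ≥ 0`. The field
`exists_forall_lt` makes infinite sums of normally ordered products locally finite. -/
structure IsFockModule (h : ℤ → Module.End R V) (v : V) : Prop where
  lie_eq (i j : ℤ) : ⁅h i, h j⁆ = (if i + j = 0 then (i : R) else 0) • (1 : Module.End R V)
  exists_forall_lt (p : V) : ∃ B : ℤ, ∀ n, B < n → h n p = 0
  vacuum {n : ℤ} (hn : 0 ≤ n) : h n v = 0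
  cyclic (W : Submodule R V) (hv : v ∈ W) (hW : ∀ n, ∀ p ∈ W, h n p ∈ W) : W = ⊤

/-- The normally ordered product `:h(i)h(j):` of two members of a family of operators. -/
def normalOrder (h : ℤ → Module.End R V) (i j : ℤ) : Module.End R V :=
  if i ≤ j then h i * h j else h j * h i

namespace IsFockModule

variable {h : ℤ → Module.End R V} {v : V} (hF : IsFockModule h v)

include hF

theorem ext_of_lie {S T : Module.End R V} (hv : S v = T v) (hlie : ∀ k, ⁅S, h k⁆ = ⁅T, h k⁆) :
    S = T := by
  rw [← LinearMap.eqLocus_eq_top]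
  refine hF.cyclic _ hv fun n p hp => ?_
  rw [LinearMap.mem_eqLocus] at hp ⊢
  rw [end_apply_apply_eq_lie_apply_add, hlie, hp, ← end_apply_apply_eq_lie_apply_add]

theorem normalOrder_eq_mul_sub (i j : ℤ) :
    normalOrder h i j = h i * h j - (if j < i ∧ i + j = 0 then (i : R) else 0) • 1 := by
  unfold normalOrder
  split_ifs with hij hji hji
  · omega
  · simp
  · rw [eq_sub_iff_add_eq', ← eq_sub_iff_add_eq, ← Ring.lie_def, hF.lie_eq, if_pos hji.2]
  · rw [zero_smul, sub_zero, ← sub_eq_zero, ← Ring.lie_def, hF.lie_eq, if_neg (by omega), zero_smul]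

theorem normalOrder_of_nonpos {i : ℤ} (hi : i ≤ 0) (j : ℤ) :
    normalOrder h i j = h i * h j := by
  rw [hF.normalOrder_eq_mul_sub, if_neg (by omega), zero_smul, sub_zero]

theorem normalOrder_vacuum {i j : ℤ} (hij : 0 ≤ i ∨ 0 ≤ j) : normalOrder h i j v = 0 := by
  unfold normalOrder
  split_ifs <;> rw [Module.End.mul_apply, hF.vacuum (by omega), map_zero]

theorem lie_normalOrder (i j k : ℤ) :
    ⁅normalOrder h i j, h k⁆
      = (if j + k = 0 then (j : R) else 0) • h i + (if i + k = 0 then (i : R) else 0) • h j := by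
  rw [hF.normalOrder_eq_mul_sub, sub_lie, smul_one_lie, sub_zero, lie_mul_left, hF.lie_eq,
    hF.lie_eq, mul_smul_one, smul_one_mul]

theorem finite_support_normalOrder (n : ℤ) (c : ℤ → R) (p : V) :
    (Function.support fun j => c j • normalOrder h j (n - j) p).Finite := by
  obtain ⟨B, hB⟩ := hF.exists_forall_lt p
  refine (Set.finite_Icc (n - B) B).subset fun j hj => ?_
  by_contra hjB
  rw [Set.mem_Icc, not_and_or] at hjB
  refine hj ?_
  dsimp only
  unfold normalOrder
  split_ifs <;> rw [Module.End.mul_apply, hB _ (by omega), map_zero, smul_zero]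

/-- The operator `∑ⱼ c(j) :h(j)h(n-j):`, a linear function of the coefficients `c`. -/
def normalOrderedSum (n : ℤ) : (ℤ → R) →ₗ[R] Module.End R V :=
  LinearMap.mk₂ R (fun c p => ∑ᶠ j, c j • normalOrder h j (n - j) p)
    (fun c d p => by
      simp only [Pi.add_apply, add_smul]
      exact finsum_add_distrib (hF.finite_support_normalOrder n c p)
        (hF.finite_support_normalOrder n d p))
    (fun a c p => by
      simp only [Pi.smul_apply, smul_assoc]
      exact (smul_finsum' a (hF.finite_support_normalOrder n c p)).symm)
    (fun c p q => by
      simp only [map_add, smul_add]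
      exact finsum_add_distrib (hF.finite_support_normalOrder n c p)
        (hF.finite_support_normalOrder n c q))
    (fun a c p => by
      simp only [map_smul, smul_comm _ a]
      exact (smul_finsum' a (hF.finite_support_normalOrder n c p)).symm)

theorem normalOrderedSum_apply (n : ℤ) (c : ℤ → R) (p : V) :
    hF.normalOrderedSum n c p = ∑ᶠ j, c j • normalOrder h j (n - j) p :=
  rfl

theorem lie_normalOrderedSum (n : ℤ) (c : ℤ → R) (k : ℤ) :
    ⁅hF.normalOrderedSum n c, h k⁆ = (-(k : R) * (c (-k) + c (n + k))) • h (n + k) := by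
  ext p
  have hlie (j : ℤ) :
      c j • normalOrder h j (n - j) (h k p) - h k (c j • normalOrder h j (n - j) p)
      = (Pi.single (n + k) ((-(k : R) * c (n + k)) • h (n + k) p) : ℤ → V) j
        + (Pi.single (-k) ((-(k : R) * c (-k)) • h (n + k) p) : ℤ → V) j := by
    rw [map_smul, ← smul_sub, end_apply_apply_eq_lie_apply_add, add_sub_cancel_right,
      hF.lie_normalOrder, LinearMap.add_apply, smul_add]
    congr 1
    · obtain rfl | hj := eq_or_ne j (n + k)
      · simp [smul_smul, mul_comm]
      · simp [hj, show n - j + k ≠ 0 by omega]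
    · obtain rfl | hj := eq_or_ne j (-k)
      · simp [smul_smul, mul_comm]
      · simp [hj, show j + k ≠ 0 by omega]
  have hsingle (i : ℤ) (x : V) : (Function.support (Pi.single i x : ℤ → V)).Finite :=
    (Set.finite_singleton i).subset Pi.support_single_subset
  have hfin := hF.finite_support_normalOrder n c p
  have hfin' : (Function.support fun j => h k (c j • normalOrder h j (n - j) p)).Finite :=
    hfin.subset (Function.support_comp_subset (map_zero _) _)
  calc ⁅hF.normalOrderedSum n c, h k⁆ p
    _ = ∑ᶠ j, c j • normalOrder h j (n - j) (h k p)
          - h k (∑ᶠ j, c j • normalOrder h j (n - j) p) := rfl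
    _ = ∑ᶠ j, (c j • normalOrder h j (n - j) (h k p)
          - h k (c j • normalOrder h j (n - j) p)) := by
      rw [finsum_sub_distrib (hF.finite_support_normalOrder n c _) hfin', map_finsum _ hfin]
    _ = (-(k : R) * c (n + k)) • h (n + k) p + (-(k : R) * c (-k)) • h (n + k) p := by
      rw [finsum_congr hlie, finsum_add_distrib (hsingle _ _) (hsingle _ _)]
      congr 1 <;> rw [finsum_eq_single _ _ fun j hj => Pi.single_eq_of_ne hj _,
        Pi.single_eq_same]
    _ = _ := by
      rw [LinearMap.smul_apply, ← add_smul, ← mul_add, add_comm]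

end IsFockModule

end FockModule

section Virasoro

attribute [local instance] LieRing.ofAssociativeRing

namespace IsFockModule

section Vacuum

variable {R V : Type*} [CommRing R] [AddCommGroup V] [Module R V] {h : ℤ → Module.End R V} {v : V}
  (hF : IsFockModule h v)

include hF

theorem normalOrderedSum_vacuum {n : ℤ} (hn : 0 ≤ n) (c : ℤ → R) :
    hF.normalOrderedSum n c v = 0 := by
  rw [normalOrderedSum_apply, ← finsum_zero (α := ℤ)]
  exact finsum_congr fun j => by rw [hF.normalOrder_vacuum (by omega), smul_zero]

theorem normalOrderedSum_neg_vacuum (m : ℕ) (c : ℤ → R) :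
    hF.normalOrderedSum (-m) c v = ∑ i ∈ Finset.Icc 1 m, c (-i) • h (-i) (h (i - m) v) := by
  have hsupport : (Function.support fun j => c j • normalOrder h j (-m - j) v)
      ⊆ ((Finset.Icc 1 m).image fun i : ℕ => -(i : ℤ) : Finset ℤ) := by
    intro j hj
    by_contra hjm
    refine hj ?_
    have hpos : 0 ≤ j ∨ 0 ≤ -m - j := by
      by_contra! hneg
      exact hjm (Finset.mem_coe.2 (Finset.mem_image.2
        ⟨j.natAbs, Finset.mem_Icc.2 (by omega), by omega⟩))
    simp only [hF.normalOrder_vacuum hpos, smul_zero]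
  rw [normalOrderedSum_apply, finsum_eq_sum_of_support_subset _ hsupport,
    Finset.sum_image fun i _ j _ hij => by simpa using hij]
  refine Finset.sum_congr rfl fun i _ => ?_
  rw [hF.normalOrder_of_nonpos (by omega), Module.End.mul_apply,
    show -(m : ℤ) - -(i : ℤ) = i - m by ring]

theorem normalOrderedSum_zero_of_odd {c : ℤ → R} (hc : ∀ j, c (-j) = -c j) :
    hF.normalOrderedSum 0 c = 0 := by
  refine hF.ext_of_lie (hF.normalOrderedSum_vacuum le_rfl c) fun k => ?_
  rw [hF.lie_normalOrderedSum, hc, zero_add, neg_add_cancel, mul_zero, zero_smul, zero_lie]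

end Vacuum

variable {K V : Type*} [Field K] [AddCommGroup V] [Module K V] {h : ℤ → Module.End K V} {v : V}
  (hF : IsFockModule h v)

include hF

/-- The operator `L⁽ʳ⁾(n)` on a Fock module; for `r = 0` these are the Virasoro operators. -/
def virasoroMode (r : ℕ) (n : ℤ) : Module.End K V :=
  (1 / 2 : K) • hF.normalOrderedSum n fun j => (j : K) ^ r * (n - j) ^ r

theorem virasoroMode_vacuum (r : ℕ) {n : ℤ} (hn : 0 ≤ n) : hF.virasoroMode r n v = 0 := by
  rw [virasoroMode, LinearMap.smul_apply, hF.normalOrderedSum_vacuum hn, smul_zero]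

variable [NeZero (2 : K)]

theorem lie_virasoroMode (r : ℕ) (n k : ℤ) :
    ⁅hF.virasoroMode r n, h k⁆ = ((-k : K) ^ (r + 1) * (n + k) ^ r) • h (n + k) := by
  rw [virasoroMode, smul_lie, hF.lie_normalOrderedSum, smul_smul]
  congr 1
  push_cast
  field [two_ne_zero (α := K)]

theorem virasoroMode_apply_of_le (r : ℕ) {i m : ℕ} (him : i ≤ m) :
    hF.virasoroMode r m (h (-i) (h (i - m) v)) = ((i : K) * (m - i)) ^ (r + 1) • v := by
  have hcontract : h (m - i) (h (i - m) v) = ((m : K) - i) • v := by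
    rw [end_apply_apply_eq_lie_apply_add, hF.lie_eq, if_pos (by ring), hF.vacuum (by omega),
      map_zero, add_zero]
    simp
  have hinner : hF.virasoroMode r m (h (i - m) v) = 0 := by
    rw [end_apply_apply_eq_lie_apply_add, lie_virasoroMode, hF.virasoroMode_vacuum r (by omega),
      map_zero, add_zero, LinearMap.smul_apply, hF.vacuum (by omega), smul_zero]
  rw [end_apply_apply_eq_lie_apply_add, hinner, map_zero, add_zero, lie_virasoroMode,
    LinearMap.smul_apply, ← sub_eq_add_neg, hcontract, smul_smul, mul_pow]
  congr 1
  push_cast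
  ring

theorem lie_virasoroMode_vacuum (r s m : ℕ) :
    ⁅hF.virasoroMode r m, hF.virasoroMode s (-m)⁆ v
      = (1 / 2 * ∑ i ∈ Finset.Icc 1 m, ((i : K) * (m - i)) ^ (r + s + 1)) • v := by
  have hterm (i : ℕ) (hi : i ∈ Finset.Icc 1 m) :
      hF.virasoroMode r m ((((-i : ℤ) : K) ^ s * ((-m : ℤ) - (-i : ℤ)) ^ s)
        • h (-i) (h (i - m) v)) = ((i : K) * (m - i)) ^ (r + s + 1) • v := by
    rw [map_smul, hF.virasoroMode_apply_of_le r (Finset.mem_Icc.1 hi).2, smul_smul, ← mul_pow]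
    congr 1
    push_cast
    ring
  rw [Ring.lie_def, LinearMap.sub_apply, Module.End.mul_apply, Module.End.mul_apply,
    hF.virasoroMode_vacuum r (by omega), map_zero, sub_zero]
  nth_rw 2 [virasoroMode]
  rw [LinearMap.smul_apply, hF.normalOrderedSum_neg_vacuum, map_smul, map_sum,
    Finset.sum_congr rfl hterm, ← Finset.sum_smul, smul_smul]

theorem lie_virasoroMode_virasoroMode_neg (r s m : ℕ) :
    ⁅hF.virasoroMode r m, hF.virasoroMode s (-m)⁆
      = hF.normalOrderedSum 0 (fun j => (j : K) ^ (r + s) * (m - j) ^ (r + s + 1))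
        + (1 / 2 * ∑ i ∈ Finset.Icc 1 m, ((i : K) * (m - i)) ^ (r + s + 1)) • 1 := by
  refine hF.ext_of_lie ?_ fun k => ?_
  · rw [hF.lie_virasoroMode_vacuum, LinearMap.add_apply, hF.normalOrderedSum_vacuum le_rfl,
      zero_add, LinearMap.smul_apply, Module.End.one_apply]
  · rw [lie_lie_of_lie_eq_smul (hF.lie_virasoroMode r m) (hF.lie_virasoroMode s (-m)), add_lie,
      smul_one_lie, add_zero, hF.lie_normalOrderedSum, add_neg_cancel]
    congr 1
    have hsign (x y : K) : (-x) ^ (s + 1) * (-y) ^ s = -(x ^ (s + 1) * y ^ s) := by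
      rw [pow_succ, mul_right_comm, ← mul_pow, neg_mul_neg]
      ring
    push_cast
    linear_combination (m - k : K) ^ (r + 1) * (k : K) ^ r * hsign k (m - k)
      - (-k : K) ^ (r + 1) * (m + k : K) ^ r * hsign (m + k) (-k)

end IsFockModule

end Virasoro

section ZetaRegularisation

open Polynomial

/-- Zeta regularisation of the divergent sum `∑_{k ≥ 1} f(k)` of a polynomial `f`: the linear
functional `Xʲ ↦ ζ(-j)`. -/
def zetaReg : ℂ[X] →ₗ[ℂ] ℂ :=
  Polynomial.lsum fun j : ℕ => riemannZeta (-(j : ℂ)) • LinearMap.id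

theorem zetaReg_monomial (j : ℕ) (a : ℂ) : zetaReg (monomial j a) = riemannZeta (-j) * a := by
  simp [zetaReg, Polynomial.lsum]

theorem riemannZeta_neg_eq_zero_of_even {j : ℕ} (hj : Even j) (hj0 : j ≠ 0) :
    riemannZeta (-j) = 0 := by
  obtain ⟨n, rfl⟩ := hj
  obtain ⟨n, rfl⟩ := Nat.exists_eq_add_one_of_ne_zero (show n ≠ 0 by omega)
  rw [← riemannZeta_neg_two_mul_nat_add_one n]
  congr 1
  push_cast
  ring

theorem zetaReg_add_zetaReg_comp_neg_X (f : ℂ[X]) :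
    zetaReg f + zetaReg (f.comp (-X)) = -f.eval 0 := by
  induction f using Polynomial.induction_on' with
  | add p q hp hq =>
    simp only [add_comp, map_add, eval_add]
    linear_combination hp + hq
  | monomial j a =>
    have hcomp : (monomial j a).comp (-X) = monomial j ((-1) ^ j * a) := by
      rw [monomial_comp, neg_pow, ← C_mul_X_pow_eq_monomial]
      simp only [C_mul, C_pow, C_neg, C_1]
      ring
    rw [hcomp, zetaReg_monomial, zetaReg_monomial]
    rcases Nat.even_or_odd j with hj | hj
    · obtain rfl | hj0 := eq_or_ne j 0
      · simp only [CharP.cast_eq_zero, neg_zero, riemannZeta_zero, pow_zero, one_mul, eval_monomial,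
          mul_one]
        ring
      · rw [riemannZeta_neg_eq_zero_of_even hj hj0]
        simp [hj0]
    · simp [hj.neg_one_pow, hj.pos.ne']

theorem sum_range_choose_mul_riemannZeta_neg (j : ℕ) :
    ∑ i ∈ Finset.range j, (j.choose i : ℂ) * riemannZeta (-i) = 1 / (j + 1) - 1 := by
  have hterm (i : ℕ) : ((j + 1).choose (i + 1) : ℂ) * bernoulli' (i + 1)
      = -(j + 1) * (j.choose i * riemannZeta (-i)) := by
    have hi : (i : ℂ) + 1 ≠ 0 := i.cast_add_one_ne_zero
    have hchoose : ((j : ℂ) + 1) * j.choose i = (j + 1).choose (i + 1) * (i + 1) := by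
      exact_mod_cast Nat.add_one_mul_choose_eq j i
    rw [riemannZeta_neg_nat_eq_bernoulli']
    field_simp
    linear_combination -(bernoulli' (i + 1) : ℂ) * hchoose
  have hbernoulli : ∑ i ∈ Finset.range j, ((j + 1).choose (i + 1) : ℂ) * bernoulli' (i + 1) + 1
      = j + 1 := by
    have h := sum_bernoulli' (j + 1)
    rw [Finset.sum_range_succ', bernoulli'_zero, Nat.choose_zero_right] at h
    exact_mod_cast h
  rw [Finset.sum_congr rfl fun i _ => hterm i, ← Finset.mul_sum] at hbernoulli
  have hj : (j : ℂ) + 1 ≠ 0 := j.cast_add_one_ne_zero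
  field_simp
  linear_combination -hbernoulli

theorem integral_zero_one_ofReal_pow (j : ℕ) : ∫ x in (0 : ℝ)..1, (x : ℂ) ^ j = 1 / (j + 1) := by
  have h : ((∫ x in (0 : ℝ)..1, x ^ j : ℝ) : ℂ) = 1 / (j + 1) := by simp [integral_pow]
  rw [← h, ← intervalIntegral.integral_ofReal]
  simp only [Complex.ofReal_pow]

theorem zetaReg_sub_zetaReg_taylor_one (f : ℂ[X]) :
    zetaReg f - zetaReg (taylor 1 f) = f.eval 1 - ∫ x in (0 : ℝ)..1, f.eval (x : ℂ) := by
  induction f using Polynomial.induction_on' with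
  | add p q hp hq =>
    simp only [map_add, eval_add]
    rw [intervalIntegral.integral_add
      (Continuous.intervalIntegrable (by fun_prop) _ _)
      (Continuous.intervalIntegrable (by fun_prop) _ _)]
    linear_combination hp + hq
  | monomial j a =>
    have htaylor : taylor 1 (monomial j a)
        = ∑ i ∈ Finset.range (j + 1), monomial i (a * (j.choose i : ℂ)) := by
      rw [taylor_monomial, add_pow, Finset.mul_sum]
      refine Finset.sum_congr rfl fun i _ => ?_
      rw [← C_mul_X_pow_eq_monomial]
      simp only [C_1, one_pow, mul_one, C_mul, map_natCast]
      ring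
    have hzeta : zetaReg (taylor 1 (monomial j a))
        = a * ∑ i ∈ Finset.range j, (j.choose i : ℂ) * riemannZeta (-i)
          + zetaReg (monomial j a) := by
      rw [htaylor, Finset.sum_range_succ, map_add, map_sum, Nat.choose_self, Nat.cast_one, mul_one,
        Finset.mul_sum]
      congr 1
      refine Finset.sum_congr rfl fun i _ => ?_
      rw [zetaReg_monomial]
      ring
    simp only [hzeta, sum_range_choose_mul_riemannZeta_neg, eval_monomial, one_pow,
      intervalIntegral.integral_const_mul, integral_zero_one_ofReal_pow]
    ring

theorem zetaReg_sub_zetaReg_taylor (f : ℂ[X]) (m : ℕ) :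
    zetaReg f - zetaReg (taylor (m : ℂ) f)
      = ∑ i ∈ Finset.Icc 1 m, f.eval (i : ℂ) - ∫ x in (0 : ℝ)..m, f.eval (x : ℂ) := by
  induction m with
  | zero => simp
  | succ m ih =>
    have hstep := zetaReg_sub_zetaReg_taylor_one (taylor (m : ℂ) f)
    simp only [taylor_taylor, taylor_eval] at hstep
    have hshift : ∫ x in (0 : ℝ)..1, f.eval ((x : ℂ) + m)
        = ∫ x in (m : ℝ)..(m + 1), f.eval (x : ℂ) := by
      simpa [add_comm] using intervalIntegral.integral_comp_add_right (a := 0) (b := 1)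
        (fun x : ℝ => f.eval (x : ℂ)) (m : ℝ)
    have hadd := intervalIntegral.integral_add_adjacent_intervals (μ := MeasureTheory.volume)
      (f := fun x : ℝ => f.eval (x : ℂ)) (a := 0) (b := m) (c := m + 1)
      (Continuous.intervalIntegrable (by fun_prop) _ _)
      (Continuous.intervalIntegrable (by fun_prop) _ _)
    rw [Finset.sum_Icc_succ_top (by omega)]
    push_cast
    rw [← hadd, ← hshift, add_comm (m : ℂ) 1]
    linear_combination ih + hstep

theorem integral_pow_mul_sub_pow (k n : ℕ) {a : ℝ} (ha : 0 ≤ a) :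
    ∫ x in (0 : ℝ)..a, (x : ℂ) ^ k * (a - x) ^ n
      = k.factorial * n.factorial / (k + n + 1).factorial * (a : ℂ) ^ (k + n + 1) := by
  obtain rfl | ha := ha.eq_or_lt
  · simp
  have hGamma := Complex.Gamma_mul_Gamma_eq_betaIntegral (s := k + 1) (t := n + 1)
    (by norm_cast; omega) (by norm_cast; omega)
  have hbeta := Complex.betaIntegral_scaled (k + 1) (n + 1) ha
  have hsum : (k + 1 + (n + 1) : ℂ) = (k + n + 1 : ℕ) + 1 := by
    push_cast
    ring
  rw [hsum] at hGamma hbeta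
  simp only [add_sub_cancel_right, Complex.cpow_natCast, Complex.Gamma_nat_eq_factorial]
    at hGamma hbeta
  have hfactorial : ((k + n + 1).factorial : ℂ) ≠ 0 := Nat.cast_ne_zero.2 (Nat.factorial_ne_zero _)
  rw [hbeta, hGamma, mul_div_cancel_left₀ _ hfactorial, mul_comm]

theorem zetaReg_mul_sub_pow {N : ℕ} (hN : N ≠ 0) (m : ℕ) :
    zetaReg ((X * (C (m : ℂ) - X)) ^ N)
      = 1 / 2 * (∑ i ∈ Finset.Icc 1 m, ((i : ℂ) * (m - i)) ^ N
        - N.factorial ^ 2 / (2 * N + 1).factorial * (m : ℂ) ^ (2 * N + 1)) := by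
  set f : ℂ[X] := (X * (C (m : ℂ) - X)) ^ N
  have heval (x : ℂ) : f.eval x = (x * (m - x)) ^ N := by simp [f]
  have hsymm : taylor (m : ℂ) f = f.comp (-X) := by
    simp only [f, taylor_apply, pow_comp, mul_comp, X_comp, sub_comp, C_comp]
    ring
  have hintegral : ∫ x in (0 : ℝ)..m, f.eval (x : ℂ)
      = N.factorial ^ 2 / (2 * N + 1).factorial * (m : ℂ) ^ (2 * N + 1) := by
    simp only [heval, mul_pow, two_mul, sq]
    exact_mod_cast integral_pow_mul_sub_pow N N m.cast_nonneg
  have hreflect := zetaReg_add_zetaReg_comp_neg_X f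
  have hshift := zetaReg_sub_zetaReg_taylor f m
  rw [hsymm, hintegral] at hshift
  simp only [heval] at hshift
  rw [heval, zero_mul, zero_pow hN] at hreflect
  linear_combination (hreflect + hshift) / 2

end ZetaRegularisation

section ZetaModes

open Polynomial

attribute [local instance] LieRing.ofAssociativeRing

namespace IsFockModule

variable {V : Type*} [AddCommGroup V] [Module ℂ V] {h : ℤ → Module.End ℂ V} {v : V}
  (hF : IsFockModule h v)

include hF

/-- The zeta-modified operator `L̄⁽ʳ⁾(n)` on a Fock module. -/
def zetaMode (r : ℕ) (n : ℤ) : Module.End ℂ V :=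
  hF.virasoroMode r n
    + (if n = 0 then (-1) ^ r * (1 / 2) * riemannZeta (-(2 * (r : ℂ)) - 1) else 0) • 1

theorem lie_zetaMode_zetaMode (r s : ℕ) (m n : ℤ) :
    ⁅hF.zetaMode r m, hF.zetaMode s n⁆ = ⁅hF.virasoroMode r m, hF.virasoroMode s n⁆ :=
  lie_add_smul_one ..

theorem normalOrderedSum_monomial_add_zetaReg_of_even (p : ℕ) (a : ℂ) :
    hF.normalOrderedSum 0 (fun j => (monomial (2 * p) a).eval (j : ℂ))
        + zetaReg (X * monomial (2 * p) a) • 1 = (2 * a * (-1) ^ p) • hF.zetaMode p 0 := by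
  have hsign : ((-1) ^ p * (-1) ^ p : ℂ) = 1 := by rw [← mul_pow]; norm_num
  have hcoeff : (fun j : ℤ => (monomial (2 * p) a).eval (j : ℂ))
      = (a * (-1) ^ p) • fun j : ℤ => (j : ℂ) ^ p * ((0 : ℤ) - j) ^ p := by
    funext j
    rw [eval_monomial, Pi.smul_apply, smul_eq_mul, Int.cast_zero, zero_sub, neg_pow]
    linear_combination (-a * (j : ℂ) ^ (2 * p)) * hsign
  have hzeta : zetaReg (X * monomial (2 * p) a) = a * riemannZeta (-(2 * p) - 1) := by
    rw [X_mul_monomial, zetaReg_monomial, mul_comm]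
    push_cast
    rw [neg_add']
  rw [hcoeff, map_smul, hzeta, zetaMode, virasoroMode, if_pos rfl, smul_add, smul_smul, smul_smul]
  congr 2
  · ring
  · linear_combination (-a * riemannZeta (-(2 * p) - 1)) * hsign

theorem normalOrderedSum_monomial_add_zetaReg_of_odd {n : ℕ} (hn : Odd n) (a : ℂ) :
    hF.normalOrderedSum 0 (fun j => (monomial n a).eval (j : ℂ))
      + zetaReg (X * monomial n a) • 1 = 0 := by
  rw [hF.normalOrderedSum_zero_of_odd fun j => by simp [hn.neg_pow], X_mul_monomial,
    zetaReg_monomial, riemannZeta_neg_eq_zero_of_even hn.add_one n.succ_ne_zero, zero_mul,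
    zero_smul, add_zero]

theorem normalOrderedSum_eval_add_zetaReg_mem_span (g : ℂ[X]) :
    hF.normalOrderedSum 0 (fun j => g.eval (j : ℂ)) + zetaReg (X * g) • 1
      ∈ Submodule.span ℂ (Set.range fun p => hF.zetaMode p 0) := by
  induction g using Polynomial.induction_on' with
  | add g₁ g₂ h₁ h₂ =>
    convert add_mem h₁ h₂ using 1
    rw [mul_add, map_add, add_smul, add_add_add_comm, ← map_add]
    simp only [eval_add, Pi.add_def]
  | monomial n a =>
    rcases Nat.even_or_odd' n with ⟨p, rfl | rfl⟩
    · rw [hF.normalOrderedSum_monomial_add_zetaReg_of_even]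
      exact Submodule.smul_mem _ _ (Submodule.subset_span ⟨p, rfl⟩)
    · rw [hF.normalOrderedSum_monomial_add_zetaReg_of_odd (odd_two_mul_add_one p)]
      exact zero_mem _

theorem lie_zetaMode_natCast_sub_mem_span (r s m : ℕ) :
    ⁅hF.zetaMode r m, hF.zetaMode s (-m)⁆
        - ((r + s + 1).factorial ^ 2 / (2 * (2 * r + 2 * s + 3).factorial)
          * (m : ℂ) ^ (2 * r + 2 * s + 3)) • 1
      ∈ Submodule.span ℂ (Set.range fun p => hF.zetaMode p 0) := by
  set g : ℂ[X] := X ^ (r + s) * (C (m : ℂ) - X) ^ (r + s + 1) with hg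
  have hXg : X * g = (X * (C (m : ℂ) - X)) ^ (r + s + 1) := by
    rw [hg, ← mul_assoc, ← pow_succ', mul_pow]
  have heval : (fun j : ℤ => g.eval (j : ℂ))
      = fun j : ℤ => (j : ℂ) ^ (r + s) * (m - j) ^ (r + s + 1) := by
    simp [hg]
  convert hF.normalOrderedSum_eval_add_zetaReg_mem_span g using 1
  rw [hF.lie_zetaMode_zetaMode, hF.lie_virasoroMode_virasoroMode_neg, heval, hXg,
    zetaReg_mul_sub_pow (Nat.add_one_ne_zero _),
    show 2 * r + 2 * s + 3 = 2 * (r + s + 1) + 1 by ring, add_sub_assoc, ← sub_smul]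
  congr 2
  ring

theorem lie_zetaMode_sub_mem_span (r s : ℕ) (m : ℤ) :
    ⁅hF.zetaMode r m, hF.zetaMode s (-m)⁆
        - ((r + s + 1).factorial ^ 2 / (2 * (2 * r + 2 * s + 3).factorial)
          * (m : ℂ) ^ (2 * r + 2 * s + 3)) • 1
      ∈ Submodule.span ℂ (Set.range fun p => hF.zetaMode p 0) := by
  obtain ⟨k, rfl | rfl⟩ := m.eq_nat_or_neg
  · exact_mod_cast hF.lie_zetaMode_natCast_sub_mem_span r s k
  · have hodd : Odd (2 * r + 2 * s + 3) := ⟨r + s + 1, by ring⟩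
    convert neg_mem (hF.lie_zetaMode_natCast_sub_mem_span s r k) using 1
    rw [neg_neg, neg_sub', lie_skew, ← neg_smul, Int.cast_neg, Int.cast_natCast, hodd.neg_pow,
      mul_neg, add_comm r s, add_comm (2 * r)]

end IsFockModule

theorem zeta_modified_commutators_pure_monomial_general {V : Type*} [AddCommGroup V] [Module ℂ V]
    {h : ℤ → Module.End ℂ V} {v : V} (hF : IsFockModule h v)
    (LR : ℕ → ℤ → Module.End ℂ V)
    (hLR : ∀ (r : ℕ) (n : ℤ) (p : V), LR r n p
      = (1 / 2 : ℂ) • ∑ᶠ j : ℤ, ((j : ℂ) ^ r * (n - j) ^ r) • normalOrder h j (n - j) p)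
    (Lb : ℕ → ℤ → Module.End ℂ V)
    (hb0 : ∀ r : ℕ, Lb r 0
      = LR r 0 + ((-1) ^ r * (1 / 2) * riemannZeta (-(2 * (r : ℂ)) - 1)) • 1)
    (hbn : ∀ (r : ℕ) (n : ℤ), n ≠ 0 → Lb r n = LR r n) (r s : ℕ) (m : ℤ) :
    Lb r m * Lb s (-m) - Lb s (-m) * Lb r m
        - ((r + s + 1).factorial ^ 2 / (2 * (2 * r + 2 * s + 3).factorial)
          * (m : ℂ) ^ (2 * r + 2 * s + 3)) • 1
      ∈ Submodule.span ℂ {g | ∃ p : ℕ, g = Lb p 0} := by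
  obtain rfl : LR = hF.virasoroMode := by
    ext r n p
    exact hLR r n p
  obtain rfl : Lb = hF.zetaMode := by
    funext r n
    obtain rfl | hn := eq_or_ne n 0
    · rw [hb0, IsFockModule.zetaMode, if_pos rfl]
    · rw [hbn r n hn, IsFockModule.zetaMode, if_neg hn, zero_smul, add_zero]
  simp only [eq_comm (b := hF.zetaMode _ 0)]
  exact hF.lie_zetaMode_sub_mem_span r s m

end ZetaModes

section HeisenbergOperators

attribute [local instance] LieRing.ofAssociativeRing

theorem hOp_zero : hOp 0 = 0 := by
  simp [hOp]

theorem hOp_pnat_apply (n : ℕ+) (p : SS) : hOp n p = (n : ℂ) • MvPolynomial.pderiv n p := by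
  have hn : (0 : ℤ) < n := mod_cast n.pos
  have htoNat : (⟨((n : ℕ) : ℤ).toNat, by omega⟩ : ℕ+) = n := PNat.eq (by simp)
  rw [show hOp n = _ from dif_pos hn, htoNat, Int.cast_natCast]
  rfl

theorem hOp_neg_pnat_apply (n : ℕ+) (p : SS) : hOp (-n) p = MvPolynomial.X n * p := by
  have hn : (0 : ℤ) < n := mod_cast n.pos
  have htoNat : (⟨(-(-((n : ℕ) : ℤ))).toNat, by omega⟩ : ℕ+) = n := PNat.eq (by simp)
  rw [show hOp (-n) = _ from (dif_neg (by omega)).trans (dif_pos (by omega)), htoNat]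
  rfl

theorem eq_zero_or_pnat_or_neg_pnat (k : ℤ) : k = 0 ∨ (∃ n : ℕ+, k = n) ∨ ∃ n : ℕ+, k = -n := by
  rcases lt_trichotomy k 0 with hk | rfl | hk
  · exact .inr (.inr ⟨⟨(-k).toNat, by omega⟩, by simp; omega⟩)
  · exact .inl rfl
  · exact .inr (.inl ⟨⟨k.toNat, by omega⟩, by simp; omega⟩)

theorem pderiv_pderiv_comm {σ R : Type*} [CommRing R] (i j : σ) (p : MvPolynomial σ R) :
    MvPolynomial.pderiv i (MvPolynomial.pderiv j p)
      = MvPolynomial.pderiv j (MvPolynomial.pderiv i p) := by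
  classical
  have hlie : ⁅MvPolynomial.pderiv (R := R) i, MvPolynomial.pderiv (R := R) j⁆ = 0 := by
    ext k
    simp [Derivation.commutator_apply, MvPolynomial.pderiv_X, Pi.single_apply, apply_ite]
  rw [← sub_eq_zero, ← Derivation.commutator_apply, hlie, Derivation.zero_apply]

theorem lie_hOp_pnat_pnat (a b : ℕ+) : ⁅hOp a, hOp b⁆ = 0 := by
  refine LinearMap.ext fun p => ?_
  rw [Ring.lie_def, LinearMap.sub_apply, Module.End.mul_apply, Module.End.mul_apply]
  simp only [hOp_pnat_apply, map_smul, pderiv_pderiv_comm a, smul_comm (a : ℂ), sub_self,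
    LinearMap.zero_apply]

theorem lie_hOp_neg_neg (a b : ℕ+) : ⁅hOp (-a), hOp (-b)⁆ = 0 := by
  refine LinearMap.ext fun p => ?_
  rw [Ring.lie_def, LinearMap.sub_apply, Module.End.mul_apply, Module.End.mul_apply]
  simp only [hOp_neg_pnat_apply, mul_left_comm, sub_self, LinearMap.zero_apply]

theorem lie_hOp_pnat_neg (a b : ℕ+) : ⁅hOp a, hOp (-b)⁆ = (if a = b then (a : ℂ) else 0) • 1 := by
  refine LinearMap.ext fun p => ?_
  rw [Ring.lie_def, LinearMap.sub_apply, Module.End.mul_apply, Module.End.mul_apply]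
  simp only [hOp_pnat_apply, hOp_neg_pnat_apply, Derivation.leibniz, MvPolynomial.pderiv_X,
    Pi.single_apply]
  obtain rfl | hab := eq_or_ne a b
  · simp
  · simp [hab, hab.symm]

theorem lie_hOp (i j : ℤ) :
    ⁅hOp i, hOp j⁆ = (if i + j = 0 then (i : ℂ) else 0) • (1 : Module.End ℂ SS) := by
  rcases eq_zero_or_pnat_or_neg_pnat i with rfl | ⟨a, rfl⟩ | ⟨a, rfl⟩
  · simp [hOp_zero]
  · rcases eq_zero_or_pnat_or_neg_pnat j with rfl | ⟨b, rfl⟩ | ⟨b, rfl⟩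
    · simp [hOp_zero]
    · rw [lie_hOp_pnat_pnat, if_neg (by have := a.pos; omega), zero_smul]
    · rw [lie_hOp_pnat_neg]
      simp [← sub_eq_add_neg, sub_eq_zero]
  · rcases eq_zero_or_pnat_or_neg_pnat j with rfl | ⟨b, rfl⟩ | ⟨b, rfl⟩
    · simp [hOp_zero]
    · rw [← lie_skew, lie_hOp_pnat_neg]
      refine (neg_smul _ _).symm.trans (congrArg (· • (1 : Module.End ℂ SS)) ?_)
      obtain rfl | hab := eq_or_ne a b
      · simp
      · simp [hab.symm, neg_add_eq_zero, hab]
    · rw [lie_hOp_neg_neg, if_neg (by have := a.pos; omega), zero_smul]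

theorem exists_forall_lt_hOp_eq_zero (p : SS) : ∃ B : ℤ, ∀ n, B < n → hOp n p = 0 := by
  obtain ⟨B, hB⟩ := (p.vars.image fun n : ℕ+ => (n : ℤ)).bddAbove
  refine ⟨max B 0, fun n hn => ?_⟩
  obtain ⟨hBn, hn0⟩ := max_lt_iff.1 hn
  lift n to ℕ+ using hn0
  have hvars : n ∉ p.vars := fun hmem =>
    hBn.not_ge (hB (Finset.mem_coe.2 (Finset.mem_image_of_mem _ hmem)))
  rw [hOp_pnat_apply, MvPolynomial.pderiv_eq_zero_of_notMem_vars hvars, smul_zero]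

theorem hOp_one {n : ℤ} (hn : 0 ≤ n) : hOp n 1 = 0 := by
  obtain rfl | hn := hn.eq_or_lt
  · rw [hOp_zero, LinearMap.zero_apply]
  · lift n to ℕ+ using hn
    rw [hOp_pnat_apply, Derivation.map_one_eq_zero, smul_zero]

theorem eq_top_of_one_mem_of_hOp_mem (W : Submodule ℂ SS) (hone : 1 ∈ W)
    (hW : ∀ n, ∀ p ∈ W, hOp n p ∈ W) : W = ⊤ := by
  refine Submodule.eq_top_iff'.2 fun p => ?_
  induction p using MvPolynomial.induction_on with
  | C a =>
    rw [← mul_one (MvPolynomial.C a), ← MvPolynomial.smul_eq_C_mul]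
    exact W.smul_mem a hone
  | add p q hp hq => exact W.add_mem hp hq
  | mul_X p n hp =>
    rw [mul_comm, ← hOp_neg_pnat_apply]
    exact hW _ p hp

theorem isFockModule_hOp : IsFockModule hOp (1 : SS) where
  lie_eq := lie_hOp
  exists_forall_lt := exists_forall_lt_hOp_eq_zero
  vacuum := hOp_one
  cyclic := eq_top_of_one_mem_of_hOp_mem

end HeisenbergOperators

open Complex in
/-- After the zeta-function modification `L̄⁽ʳ⁾(0) = L⁽ʳ⁾(0) + (−1)ʳ(1/2)ζ(−2r−1)·id_S`,
the central term of the bracket `[L̄⁽ʳ⁾(m), L̄⁽ˢ⁾(−m)]` is a pure monomial of degree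
`2r+2s+3` in `m`: modulo the span of the `L̄⁽ᵖ⁾(0)`, the commutator equals
`c_{r,s}·m^{2r+2s+3}·id_S` for a constant `c_{r,s}` independent of `m`. -/
theorem zeta_modified_commutators_pure_monomial
    (LR : ℕ → ℤ → Module.End ℂ SS)
    (hLR : ∀ (r : ℕ) (n : ℤ) (p : SS), LR r n p
      = (1 / 2 : ℂ) •
          ∑ᶠ j : ℤ, ((j : ℂ) ^ r * ((n : ℂ) - (j : ℂ)) ^ r) • nord j (n - j) p)
    (Lb : ℕ → ℤ → Module.End ℂ SS)
    (hb0 : ∀ r : ℕ, Lb r 0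
      = LR r 0 + ((-1 : ℂ) ^ r * (1 / 2 : ℂ) * riemannZeta (-(2 * (r : ℂ)) - 1)) •
          (1 : Module.End ℂ SS))
    (hbn : ∀ (r : ℕ) (n : ℤ), n ≠ 0 → Lb r n = LR r n)
    (r s : ℕ) :
    ∃ c : ℂ, ∀ m : ℤ,
      Lb r m * Lb s (-m) - Lb s (-m) * Lb r m
          - (c * (m : ℂ) ^ (2 * r + 2 * s + 3)) • (1 : Module.End ℂ SS)
        ∈ Submodule.span ℂ {g | ∃ p : ℕ, g = Lb p 0} :=
  ⟨_, zeta_modified_commutators_pure_monomial_general isFockModule_hOp LR hLR Lb hb0 hbn r s⟩
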